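/- arXiv:0811.3889 — 4 statements merged into one kernel-verified Lean document; each statement's English description precedes it below -/
import Mathlib

section
/- Lagrange duality theorem, part 1: Let X be a real normed vector space with topological dual X*, let C ⊆ X be a nonempty convex cone, let D := {x* ∈ X* : ⟨x, x*⟩ ≤ 0 for all x ∈ C}, and let U : X → [-∞,∞) be a proper concave functional with dual functional U*(x*) := sup_{x∈X} { U(x) − ⟨x, x*⟩ }. Suppose there exist p in the interior of C and x ∈ C such that U(x+p) > −∞, and suppose sup_{x∈C} U(x) < ∞. Then sup_{x∈C} U(x) is a real number, it equals inf_{x*∈D} U*(x*), and this infimum is attained at some x* ∈ D. -/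
/-!
Weak duality is immediate: if `g ≤ 0` on `C`, then `U x ≤ U x - g x ≤ U*(g)` for `x ∈ C`.

For attainment let `r = sup_C U`. The open convex set `interior C × (r, ∞)` misses the hypograph
of `U`, so Hahn-Banach gives a functional `(x, t) ↦ g x + c t` and a constant `u` such that
`g x + c t < u` on the former and `u ≤ g x + c t` on the latter. The hypograph is
unbounded below in `t`, which forces `c ≤ 0`; the Slater point `x + p` lies in `interior C` and in
the domain of `U`, which excludes `c = 0`. Since `C ⊆ closure (interior C)`, letting points approach
`(x, r)` yields `g x + c r ≤ u` for every `x ∈ C`. Scaling `x` gives `g ≤ 0` on `C`, and `x = 0` gives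
`u / c ≤ r`, so `f = -g / c` is a dual optimizer.
-/

open Set Filter Topology

noncomputable section

variable {X : Type*} [NormedAddCommGroup X] [NormedSpace ℝ X]

/-- The hypograph of an `EReal`-valued functional. -/
def hypograph (U : X → EReal) : Set (X × ℝ) :=
  {p | (p.2 : EReal) ≤ U p.1}

/-- A functional `U : X → [-∞,∞)` is proper concave if its hypograph is convex,
it never takes the value `+∞`, and its effective domain is nonempty. -/
def ProperConcave (U : X → EReal) : Prop :=
  Convex ℝ (hypograph U) ∧ (∀ x, U x ≠ ⊤) ∧ (∃ x, U x ≠ ⊥)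

/-- The dual functional `U*(x*) = sup_x { U(x) - ⟨x, x*⟩ }`. -/
def dualFn (U : X → EReal) (f : X →L[ℝ] ℝ) : EReal :=
  ⨆ x : X, U x - ((f x : ℝ) : EReal)

/-- Adding a positive multiple of an interior point of a convex cone to any of its points gives
an interior point; this yields both `C + interior C ⊆ interior C` and `C ⊆ closure (interior C)`. -/
theorem add_smul_mem_interior_cone {C : Set X}
    (hCone : ∀ a b : ℝ, 0 ≤ a → 0 ≤ b → ∀ x ∈ C, ∀ y ∈ C, a • x + b • y ∈ C)
    {x p : X} (hx : x ∈ C) (hp : p ∈ interior C) {s : ℝ} (hs : 0 < s) :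
    x + s • p ∈ interior C := by
  have hopen : IsOpen ((fun z : X => s⁻¹ • (z - x)) ⁻¹' interior C) :=
    isOpen_interior.preimage (by fun_prop)
  refine interior_maximal ?_ hopen ?_
  · intro z hz
    have h := hCone 1 s zero_le_one hs.le x hx _ (interior_subset hz)
    simpa [smul_smul, hs.ne'] using h
  · simpa [smul_smul, hs.ne'] using hp

theorem weak_duality (U : X → EReal) {C : Set X} {g : X →L[ℝ] ℝ} (hg : ∀ x ∈ C, g x ≤ 0) :
    (⨆ x ∈ C, U x) ≤ dualFn U g := by
  refine iSup₂_le fun x hx => le_trans ?_ (le_iSup (fun x : X => U x - ((g x : ℝ) : EReal)) x)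
  have h0 : ((g x : ℝ) : EReal) ≤ 0 := by exact_mod_cast hg x hx
  calc U x = U x - 0 := by simp
    _ ≤ U x - ((g x : ℝ) : EReal) := EReal.sub_le_sub le_rfl h0

/-- **Lagrange duality theorem, part 1.**  Let `C` be a nonempty convex cone in a real
normed space `X`, `D = {x* : ⟨x,x*⟩ ≤ 0 ∀ x ∈ C}`, and `U` proper concave.  If there are
`p ∈ int C` and `x ∈ C` with `U(x+p) > -∞`, and `sup_{x∈C} U(x) < ∞`, then
`sup_{x∈C} U(x)` is a real number, equals `inf_{x*∈D} U*(x*)`, and the infimum is attained. -/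
theorem lagrange_duality_part1
    (U : X → EReal) (hU : ProperConcave U)
    (C : Set X) (hCne : C.Nonempty)
    (hCone : ∀ a b : ℝ, 0 ≤ a → 0 ≤ b → ∀ x ∈ C, ∀ y ∈ C, a • x + b • y ∈ C)
    (hSlater : ∃ p ∈ interior C, ∃ x ∈ C, U (x + p) ≠ ⊥)
    (hfin : (⨆ x ∈ C, U x) < ⊤) :
    ∃ r : ℝ, (⨆ x ∈ C, U x) = (r : EReal) ∧
      (∃ f : X →L[ℝ] ℝ, (∀ x ∈ C, f x ≤ 0) ∧ dualFn U f = (r : EReal)) ∧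
      (∀ g : X →L[ℝ] ℝ, (∀ x ∈ C, g x ≤ 0) → (r : EReal) ≤ dualFn U g) := by
  obtain ⟨hconv, htop, -⟩ := hU
  obtain ⟨p, hp, x₀, hx₀, hU₀⟩ := hSlater
  have hz : x₀ + p ∈ interior C := by
    simpa using add_smul_mem_interior_cone hCone hx₀ hp one_pos
  have hle : ∀ x ∈ C, U x ≤ ⨆ x ∈ C, U x := fun x hx => le_iSup₂ (f := fun x _ => U x) x hx
  have hbot : (⨆ x ∈ C, U x) ≠ ⊥ := fun h =>
    hU₀ (le_bot_iff.1 (h ▸ hle _ (interior_subset hz)))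
  obtain ⟨r, hr⟩ : ∃ r : ℝ, (⨆ x ∈ C, U x) = (r : EReal) :=
    ⟨_, (EReal.coe_toReal hfin.ne hbot).symm⟩
  rw [hr] at hle
  have hweak : ∀ g : X →L[ℝ] ℝ, (∀ x ∈ C, g x ≤ 0) → (r : EReal) ≤ dualFn U g :=
    fun g hg => hr ▸ weak_duality U hg
  have hCconv : Convex ℝ C := fun x hx y hy a b ha hb _ => hCone a b ha hb x hx y hy
  have hdisj : Disjoint (interior C ×ˢ Ioi r) (hypograph U) := by
    rw [Set.disjoint_left]
    rintro ⟨x, t⟩ ⟨hx, ht⟩ htU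
    have h : (t : EReal) ≤ r := le_trans htU (hle x (interior_subset hx))
    exact absurd (EReal.coe_le_coe_iff.1 h) (not_le.2 ht)
  obtain ⟨φ, u, hA, hB⟩ := geometric_hahn_banach_open
    (hCconv.interior.prod (convex_Ioi r)) (isOpen_interior.prod isOpen_Ioi) hconv hdisj
  set g : X →L[ℝ] ℝ := φ.comp (ContinuousLinearMap.inl ℝ X ℝ) with hgdef
  set c : ℝ := φ (0, 1) with hcdef
  have hφ : ∀ x t, φ (x, t) = g x + c * t := by
    intro x t
    have h : ((x, t) : X × ℝ) = (x, 0) + t • (0, 1) := by simp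
    rw [h, map_add, map_smul]
    simp [hgdef, hcdef, mul_comm]
  have hA' : ∀ x ∈ interior C, ∀ t, r < t → g x + c * t < u := fun x hx t ht =>
    hφ x t ▸ hA (x, t) ⟨hx, ht⟩
  have hB' : ∀ x (t : ℝ), (t : EReal) ≤ U x → u ≤ g x + c * t := fun x t ht =>
    hφ x t ▸ hB (x, t) ht
  -- Compare both inequalities on the vertical line over the Slater point.
  obtain ⟨t₀, ht₀⟩ : ∃ t : ℝ, U (x₀ + p) = t :=
    ⟨_, (EReal.coe_toReal (htop _) hU₀).symm⟩
  have hc : c < 0 := by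
    have h1 := hA' _ hz (r + 1) (by linarith)
    have h2 := hB' (x₀ + p) (min t₀ r) (by rw [ht₀]; exact_mod_cast min_le_left _ _)
    have h3 := min_le_right t₀ r
    by_contra! hc
    nlinarith
  have hlim : ∀ x ∈ C, g x + c * r ≤ u := by
    intro x hx
    have hcont : Continuous fun s : ℝ => g (x + s • p) + c * (r + s) := by fun_prop
    have ht : Tendsto (fun s : ℝ => g (x + s • p) + c * (r + s)) (𝓝[>] 0) (𝓝 (g x + c * r)) := by
      simpa using (hcont.tendsto 0).mono_left nhdsWithin_le_nhds
    refine le_of_tendsto ht ?_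
    filter_upwards [self_mem_nhdsWithin] with s hs
    have hs' : 0 < s := hs
    exact (hA' _ (add_smul_mem_interior_cone hCone hx hp hs') _ (by linarith)).le
  have hg : ∀ x ∈ C, g x ≤ 0 := by
    intro x hx
    by_contra! hpos
    -- A multiple of `x` large enough to violate the bound `u - c * r`.
    have hl : 0 ≤ (|u - c * r| + 1) / g x := by positivity
    have h := hlim _ (hCone _ 0 hl le_rfl x hx x hx)
    rw [zero_smul, add_zero, map_smul, smul_eq_mul, div_mul_cancel₀ _ hpos.ne'] at h
    linarith [le_abs_self (u - c * r)]
  have hcr : c * r ≤ u := by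
    obtain ⟨y, hy⟩ := hCne
    simpa using hlim _ (hCone 0 0 le_rfl le_rfl y hy y hy)
  have hf : ∀ x ∈ C, ((-c)⁻¹ • g) x ≤ 0 := fun x hx =>
    mul_nonpos_of_nonneg_of_nonpos (inv_nonneg.2 (by linarith)) (hg x hx)
  refine ⟨r, hr, ⟨(-c)⁻¹ • g, hf, le_antisymm (iSup_le fun x => ?_) (hweak _ hf)⟩, hweak⟩
  by_cases hx : U x = ⊥
  · simp [hx]
  obtain ⟨t, ht⟩ : ∃ t : ℝ, U x = t := ⟨_, (EReal.coe_toReal (htop _) hx).symm⟩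
  have h := hB' x t ht.ge
  rw [ht, ← EReal.coe_sub, EReal.coe_le_coe_iff]
  have h2 : (-c) * (((-c)⁻¹ • g) x) = g x := by
    simp [hc.ne]
  nlinarith
end
end

section
/- Lagrange duality theorem, part 2 (degenerate case): Let X be a real normed vector space with topological dual X*, let C ⊆ X be a nonempty convex cone, let D := {x* ∈ X* : ⟨x, x*⟩ ≤ 0 for all x ∈ C}, and let U : X → [-∞,∞) be a proper concave functional with dual functional U*(x*) := sup_{x∈X} { U(x) − ⟨x, x*⟩ }. Suppose there exists p in the interior of C such that U(x − p) = −∞ for every x ∈ C, and suppose there exists x₁* ∈ D with U*(x₁*) < ∞. Then sup_{x∈C} U(x) = inf_{x*∈D} U*(x*) = −∞. -/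
/-!
Every `x ∈ C` equals `(x + p) - p` with `x + p ∈ C`, so `U = -∞` on `C`; this gives the primal
value. For the dual value, the degeneracy assumption says that the convex set `dom U + p` misses
`C`. As `int C` is nonempty, Hahn-Banach yields a continuous `g ≤ 0` on `C` that is bounded below
by some `α > 0` on `dom U` (`exists_separating_functional`). Then `x₁* + t g` lies in the polar
cone of `C` for `t ≥ 0` and `U*(x₁* + t g) ≤ U*(x₁*) - t α → -∞` as `t → ∞`
(`dualFn_add_smul_le`).
-/

open Set Filter Topology

noncomputable section

variable {X : Type*} [NormedAddCommGroup X] [NormedSpace ℝ X]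

/-- The effective domain is the projection of the hypograph, hence convex. -/
lemma convex_effectiveDomain {U : X → EReal} (hU : ProperConcave U) :
    Convex ℝ {x | U x ≠ ⊥} := by
  have h : {x | U x ≠ ⊥} = LinearMap.fst ℝ X ℝ '' hypograph U := by
    ext x
    constructor
    · intro hx
      exact ⟨(x, (U x).toReal), EReal.coe_toReal_le hx, rfl⟩
    · rintro ⟨⟨y, r⟩, hy, rfl⟩ hbot
      have hr : (r : EReal) ≤ U y := hy
      have hbot' : U y = ⊥ := hbot
      rw [hbot'] at hr
      exact EReal.coe_ne_bot r (le_bot_iff.mp hr)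
  rw [h]
  exact hU.1.linear_image _

/-- If a convex set `S` misses `C - p`, where `p` is interior to the convex cone `C`, then `S` is
strictly separated from `0` by an element of the polar cone of `C`. -/
lemma exists_separating_functional {C S : Set X} {p : X}
    (hCone : ∀ a b : ℝ, 0 ≤ a → 0 ≤ b → ∀ x ∈ C, ∀ y ∈ C, a • x + b • y ∈ C)
    (hp : p ∈ interior C) (hS : Convex ℝ S) (hdisj : ∀ x ∈ C, x - p ∉ S) :
    ∃ g : X →L[ℝ] ℝ, (∀ x ∈ C, g x ≤ 0) ∧ ∃ α : ℝ, 0 < α ∧ ∀ x ∈ S, α ≤ g x := by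
  have hC : Convex ℝ C := fun x hx y hy a b ha hb _ => hCone a b ha hb x hx y hy
  obtain ⟨g, s, hlt, hge⟩ := geometric_hahn_banach_open hC.interior isOpen_interior
    (hS.translate p) (Set.disjoint_left.mpr (by
      rintro _ hy ⟨x, hx, rfl⟩
      refine hdisj _ (interior_subset hy) ?_
      simpa using hx))
  have hle : ∀ x ∈ C, g x ≤ s := by
    intro x hx
    have hcl : x ∈ closure (interior C) := by
      rw [hC.closure_interior_eq_closure_of_nonempty_interior ⟨p, hp⟩]
      exact subset_closure hx
    exact closure_minimal (fun y hy => (hlt y hy).le)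
      (isClosed_le g.continuous continuous_const) hcl
  refine ⟨g, fun x hx => ?_, s - g p, sub_pos.mpr (hlt p hp), fun x hx => ?_⟩
  · -- A linear functional bounded above on a ray from the origin is nonpositive on it.
    by_contra! hpos
    obtain ⟨n, hn⟩ := exists_nat_gt (s / g x)
    have h := hle _ (hCone n 0 n.cast_nonneg le_rfl x hx x hx)
    rw [div_lt_iff₀ hpos] at hn
    simp at h
    linarith
  · have h := hge (p + x) ⟨x, hx, rfl⟩
    rw [map_add] at h
    linarith

lemma dualFn_add_smul_le {U : X → EReal} (htop : ∀ x, U x ≠ ⊤) {f g : X →L[ℝ] ℝ} {M α t : ℝ}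
    (hM : dualFn U f ≤ M) (hg : ∀ x, U x ≠ ⊥ → α ≤ g x) (ht : 0 ≤ t) :
    dualFn U (f + t • g) ≤ ((M - t * α : ℝ) : EReal) := by
  refine iSup_le fun x => ?_
  have hx := (le_iSup (fun x => U x - ((f x : ℝ) : EReal)) x).trans hM
  by_cases hbot : U x = ⊥
  · simp [hbot]
  have hα := mul_le_mul_of_nonneg_left (hg x hbot) ht
  lift U x to ℝ using ⟨htop x, hbot⟩ with u
  norm_cast at hx ⊢
  simp only [add_apply, smul_apply, smul_eq_mul]
  linarith

/-- **Lagrange duality theorem, part 2 (degenerate case).**  Let `C` be a nonempty convex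
cone in a real normed space `X`, `D = {x* : ⟨x,x*⟩ ≤ 0 ∀ x ∈ C}`, and `U` proper concave.
If there is `p ∈ int C` with `U(x-p) = -∞` for all `x ∈ C`, and some `x₁* ∈ D` with
`U*(x₁*) < ∞`, then `sup_{x∈C} U(x) = inf_{x*∈D} U*(x*) = -∞`. -/
theorem lagrange_duality_part2
    (U : X → EReal) (hU : ProperConcave U)
    (C : Set X) (hCne : C.Nonempty)
    (hCone : ∀ a b : ℝ, 0 ≤ a → 0 ≤ b → ∀ x ∈ C, ∀ y ∈ C, a • x + b • y ∈ C)
    (hdeg : ∃ p ∈ interior C, ∀ x ∈ C, U (x - p) = ⊥)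
    (hdual : ∃ f : X →L[ℝ] ℝ, (∀ x ∈ C, f x ≤ 0) ∧ dualFn U f ≠ ⊤) :
    (⨆ x ∈ C, U x) = ⊥ ∧
      (⨅ f ∈ {f : X →L[ℝ] ℝ | ∀ x ∈ C, f x ≤ 0}, dualFn U f) = ⊥ := by
  obtain ⟨p, hp, hpU⟩ := hdeg
  obtain ⟨f, hf, hfU⟩ := hdual
  constructor
  · simp only [iSup_eq_bot]
    intro x hx
    have h := hpU _ (hCone 1 1 zero_le_one zero_le_one x hx p (interior_subset hp))
    simpa using h
  · obtain ⟨g, hg, α, hα, hgα⟩ := exists_separating_functional hCone hp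
      (convex_effectiveDomain hU) fun x hx h => h (hpU x hx)
    obtain ⟨M, hM, -⟩ := EReal.lt_iff_exists_real_btwn.mp (lt_top_iff_ne_top.mpr hfU)
    rw [EReal.eq_bot_iff_forall_lt]
    intro m
    -- `t` is chosen large enough that `M - t * α < m`.
    obtain ⟨t, ht⟩ := exists_nat_gt ((M - m) / α)
    rw [div_lt_iff₀ hα] at ht
    have hmem : f + (t : ℝ) • g ∈ {f : X →L[ℝ] ℝ | ∀ x ∈ C, f x ≤ 0} := by
      intro x hx
      exact add_nonpos (hf x hx) (mul_nonpos_of_nonneg_of_nonpos t.cast_nonneg (hg x hx))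
    refine ((iInf₂_le _ hmem).trans
      (dualFn_add_smul_le hU.2.1 hM.le hgα t.cast_nonneg)).trans_lt ?_
    exact EReal.coe_lt_coe_iff.mpr (by linarith)
end
end

section
/- Yosida–Hewitt decomposition for Euclidean vector measures: Let (Ω, F, P) be a probability space and let m : F → ℝ^D be a finitely additive Euclidean measure which is bounded and weakly absolutely continuous with respect to P. Then there exists a unique pair (m^c, m^p) of bounded, weakly absolutely continuous finitely additive Euclidean measures on F with m = m^c + m^p, such that m^c is countably additive and m^p is purely finitely additive. -/
/-! The coordinates can be treated separately, so let `μ` be a bounded scalar charge (finitely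
additive set function on the measurable sets).

*Existence.* For a nonnegative charge `a`, the outer measure `B ↦ inf ∑ a(tₙ)`, the infimum over
countable measurable covers `t` of `B`, restricts to a measure `M ≤ a` which dominates every measure
below `a` (`exists_caPart`). Hence no nonzero measure lies below `a - M`
(`exists_decomp_of_nonneg`). Since the total variation `T` of a bounded charge is a finite charge,
`μ = (T + μ) - T` is a difference of nonnegative charges, and the difference of the two
decompositions decomposes `μ` (`exists_decomp_scalar`).

*Singularity.* If no nonzero measure lies below `a`, then `a` has countable covers of arbitrarily
small total `a`-mass; truncating such a cover shows that for every finite measure `ν` and `ε > 0`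
there is a set `X` with `a X < ε` and `ν Xᶜ < ε` (`IsPureCharge.exists_small`). For two such charges
`a, b` and a finite measure `ν ≤ a + b`, intersecting the two sets gives `ν = 0`
(`measure_eq_zero_of_le_add`). By the Hahn decomposition, a signed countably additive `κ` with
`|κ| ≤ a + b` vanishes as well (`eq_zero_of_abs_le_add`). The latter gives that the second
component in the existence part is purely finitely additive, and also uniqueness: the difference of
two countably additive parts is bounded by the sum of the variations of the two purely finitely
additive parts.
-/

open Set MeasureTheory

noncomputable section

variable {Ω : Type*} [MeasurableSpace Ω] {D : ℕ}

/-- Euclidean space `ℝ^D`. -/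
abbrev EucV (D : ℕ) := EuclideanSpace ℝ (Fin D)

/-- `m` is a finitely additive Euclidean measure (on the measurable sets):
`m ∅ = 0` and `m (A ∪ B) = m A + m B` for disjoint measurable `A, B`. -/
def FinAddVec (m : Set Ω → EucV D) : Prop :=
  m ∅ = 0 ∧ ∀ A B : Set Ω, MeasurableSet A → MeasurableSet B → Disjoint A B →
    m (A ∪ B) = m A + m B

/-- `m` is bounded: `sup_A |m A| < ∞`. -/
def BoundedVec (m : Set Ω → EucV D) : Prop :=
  ∃ c : ℝ, ∀ A : Set Ω, MeasurableSet A → ‖m A‖ ≤ c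

/-- `m` is weakly absolutely continuous with respect to `P`:
`m A = 0` whenever `P A = 0`. -/
def WeaklyAC (P : Measure Ω) (m : Set Ω → EucV D) : Prop :=
  ∀ A : Set Ω, MeasurableSet A → P A = 0 → m A = 0

/-- The total variation `|μ|(A)` of a scalar finitely additive measure: the supremum of
`Σⱼ |μ(Aⱼ)|` over finite disjoint families of measurable subsets of `A`. -/
def totalVar (μ : Set Ω → ℝ) (A : Set Ω) : EReal :=
  ⨆ (n : ℕ) (f : Fin n → Set Ω) (_ : ∀ j, MeasurableSet (f j) ∧ f j ⊆ A)
    (_ : Pairwise fun i j => Disjoint (f i) (f j)), ((∑ j, |μ (f j)| : ℝ) : EReal)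

/-- A scalar finitely additive measure. -/
def FinAddScalar (μ : Set Ω → ℝ) : Prop :=
  μ ∅ = 0 ∧ ∀ A B : Set Ω, MeasurableSet A → MeasurableSet B → Disjoint A B →
    μ (A ∪ B) = μ A + μ B

/-- A scalar measure is countably additive if `μ(⋃ₙ Aₙ) = Σₙ μ(Aₙ)` for every sequence of
pairwise disjoint measurable sets. -/
def CountAddScalar (μ : Set Ω → ℝ) : Prop :=
  ∀ A : ℕ → Set Ω, (∀ n, MeasurableSet (A n)) →
    (Pairwise fun i j => Disjoint (A i) (A j)) →
    HasSum (fun n => μ (A n)) (μ (⋃ n, A n))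

/-- A scalar finitely additive measure `μ` is purely finitely additive if every countably
additive measure `ν` with `0 ≤ ν ≤ |μ|` is zero. -/
def PurelyFAScalar (μ : Set Ω → ℝ) : Prop :=
  ∀ ν : Set Ω → ℝ, FinAddScalar ν → CountAddScalar ν →
    (∀ A : Set Ω, MeasurableSet A → 0 ≤ ν A ∧ (ν A : EReal) ≤ totalVar μ A) →
    ∀ A : Set Ω, MeasurableSet A → ν A = 0

/-- An `ℝ^D`-valued finitely additive measure is countably additive if each coordinate
measure is. -/
def CountAddVec (m : Set Ω → EucV D) : Prop :=
  ∀ i : Fin D, CountAddScalar (fun A => m A i)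

/-- An `ℝ^D`-valued finitely additive measure is purely finitely additive if each
coordinate measure is. -/
def PurelyFAVec (m : Set Ω → EucV D) : Prop :=
  ∀ i : Fin D, PurelyFAScalar (fun A => m A i)

open scoped ENNReal

/-! ### Finite additivity -/

lemma FinAddScalar.mono {a : Set Ω → ℝ} (ha : FinAddScalar a)
    (h0 : ∀ A, MeasurableSet A → 0 ≤ a A) {A B : Set Ω} (hA : MeasurableSet A)
    (hB : MeasurableSet B) (h : A ⊆ B) : a A ≤ a B := by
  have := ha.2 A (B \ A) hA (hB.diff hA) disjoint_sdiff_right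
  rw [union_sdiff_cancel h] at this
  linarith [h0 _ (hB.diff hA)]

lemma FinAddScalar.inter_add_diff {a : Set Ω → ℝ} (ha : FinAddScalar a) {A B : Set Ω}
    (hA : MeasurableSet A) (hB : MeasurableSet B) : a A = a (A ∩ B) + a (A \ B) := by
  rw [← ha.2 _ _ (hA.inter hB) (hA.diff hB) disjoint_inf_sdiff, inter_union_sdiff]

lemma FinAddScalar.union_le {a : Set Ω → ℝ} (ha : FinAddScalar a)
    (h0 : ∀ A, MeasurableSet A → 0 ≤ a A) {A B : Set Ω} (hA : MeasurableSet A)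
    (hB : MeasurableSet B) : a (A ∪ B) ≤ a A + a B := by
  have := ha.2 A (B \ A) hA (hB.diff hA) disjoint_sdiff_right
  rw [union_sdiff_self] at this
  linarith [ha.mono h0 (hB.diff hA) hB sdiff_subset]

lemma FinAddScalar.biUnion_le {a : Set Ω → ℝ} (ha : FinAddScalar a)
    (h0 : ∀ A, MeasurableSet A → 0 ≤ a A) {t : ℕ → Set Ω} (ht : ∀ n, MeasurableSet (t n))
    (s : Finset ℕ) : a (⋃ n ∈ s, t n) ≤ ∑ n ∈ s, a (t n) := by
  classical
  induction s using Finset.induction_on with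
  | empty => simp [ha.1]
  | insert n s hn ih =>
    rw [Finset.set_biUnion_insert, Finset.sum_insert hn]
    exact (ha.union_le h0 (ht n) (s.measurableSet_biUnion fun i _ => ht i)).trans (by linarith)

lemma FinAddScalar.biUnion {ι : Type*} {a : Set Ω → ℝ} (ha : FinAddScalar a) {f : ι → Set Ω}
    (hf : ∀ i, MeasurableSet (f i)) (hd : Pairwise fun i j => Disjoint (f i) (f j))
    (s : Finset ι) : a (⋃ i ∈ s, f i) = ∑ i ∈ s, a (f i) := by
  classical
  induction s using Finset.induction_on with
  | empty => simp [ha.1]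
  | insert n s hn ih =>
    rw [Finset.set_biUnion_insert, Finset.sum_insert hn, ha.2 _ _ (hf n)
      (s.measurableSet_biUnion fun i _ => hf i), ih]
    simp only [disjoint_iUnion_right]
    intro i hi
    exact hd (by rintro rfl; exact hn hi)

lemma FinAddScalar.add {a b : Set Ω → ℝ} (ha : FinAddScalar a) (hb : FinAddScalar b) :
    FinAddScalar fun A => a A + b A :=
  ⟨by simp [ha.1, hb.1], fun A B hA hB h => by
    simp only [ha.2 A B hA hB h, hb.2 A B hA hB h]; ring⟩

lemma FinAddScalar.sub {a b : Set Ω → ℝ} (ha : FinAddScalar a) (hb : FinAddScalar b) :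
    FinAddScalar fun A => a A - b A :=
  ⟨by simp [ha.1, hb.1], fun A B hA hB h => by
    simp only [ha.2 A B hA hB h, hb.2 A B hA hB h]; ring⟩

lemma CountAddScalar.sub {a b : Set Ω → ℝ} (ha : CountAddScalar a) (hb : CountAddScalar b) :
    CountAddScalar fun A => a A - b A :=
  fun A hA hd => (ha A hA hd).sub (hb A hA hd)

/-! ### Total variation -/

/-- The real-valued total variation; the value of `toReal` is meaningful for bounded charges, whose
`totalVar` is finite. -/
def realVar (μ : Set Ω → ℝ) (A : Set Ω) : ℝ := (totalVar μ A).toReal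

/-- Splitting the indices by the sign of `μ (f j)`, each half of the sum is the value of `μ` at one
set. -/
lemma sum_abs_le {μ : Set Ω → ℝ} (hμ : FinAddScalar μ) {c : ℝ}
    (hc : ∀ A, MeasurableSet A → |μ A| ≤ c) {n : ℕ} {f : Fin n → Set Ω}
    (hf : ∀ j, MeasurableSet (f j)) (hd : Pairwise fun i j => Disjoint (f i) (f j)) :
    ∑ j, |μ (f j)| ≤ 2 * c := by
  classical
  have hm : ∀ s : Finset (Fin n), MeasurableSet (⋃ i ∈ s, f i) := fun s =>
    s.measurableSet_biUnion fun i _ => hf i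
  rw [← Finset.sum_filter_add_sum_filter_not Finset.univ (fun j => 0 ≤ μ (f j))]
  have h1 : ∑ j with 0 ≤ μ (f j), |μ (f j)| ≤ c := by
    rw [Finset.sum_congr rfl (g := fun j => μ (f j))
      (fun j hj => abs_of_nonneg (Finset.mem_filter.1 hj).2), ← hμ.biUnion hf hd]
    exact (le_abs_self _).trans (hc _ (hm _))
  have h2 : ∑ j with ¬ 0 ≤ μ (f j), |μ (f j)| ≤ c := by
    rw [Finset.sum_congr rfl (g := fun j => -μ (f j))
      (fun j hj => abs_of_neg (not_le.1 (Finset.mem_filter.1 hj).2)), Finset.sum_neg_distrib,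
      ← hμ.biUnion hf hd]
    exact (neg_le_abs _).trans (hc _ (hm _))
  linarith

lemma totalVar_le {μ : Set Ω → ℝ} {A : Set Ω} {x : ℝ}
    (h : ∀ (n : ℕ) (f : Fin n → Set Ω), (∀ j, MeasurableSet (f j) ∧ f j ⊆ A) →
      (Pairwise fun i j => Disjoint (f i) (f j)) → ∑ j, |μ (f j)| ≤ x) :
    totalVar μ A ≤ x := by
  refine iSup_le fun n => iSup_le fun f => iSup_le fun hf => iSup_le fun hd => ?_
  exact EReal.coe_le_coe_iff.2 (h n f hf hd)

lemma le_totalVar {μ : Set Ω → ℝ} {A : Set Ω} {n : ℕ} {f : Fin n → Set Ω}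
    (hf : ∀ j, MeasurableSet (f j) ∧ f j ⊆ A)
    (hd : Pairwise fun i j => Disjoint (f i) (f j)) :
    ((∑ j, |μ (f j)| : ℝ) : EReal) ≤ totalVar μ A :=
  le_iSup_of_le n <| le_iSup_of_le f <| le_iSup_of_le hf <| le_iSup_of_le hd le_rfl

lemma totalVar_nonneg (μ : Set Ω → ℝ) (A : Set Ω) : 0 ≤ totalVar μ A := by
  simpa using le_totalVar (μ := μ) (A := A) (n := 0) (f := fun _ => ∅)
    (fun j => j.elim0) (fun j => j.elim0)

lemma coe_realVar {μ : Set Ω → ℝ} (hμ : FinAddScalar μ) {c : ℝ}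
    (hc : ∀ A, MeasurableSet A → |μ A| ≤ c) (A : Set Ω) :
    (realVar μ A : EReal) = totalVar μ A := by
  refine EReal.coe_toReal (ne_top_of_le_ne_top (EReal.coe_ne_top (2 * c)) ?_)
    (ne_bot_of_le_ne_bot EReal.zero_ne_bot (totalVar_nonneg μ A))
  exact totalVar_le fun n f hf hd => sum_abs_le hμ hc (fun j => (hf j).1) hd

lemma sum_le_realVar {μ : Set Ω → ℝ} (hμ : FinAddScalar μ) {c : ℝ}
    (hc : ∀ A, MeasurableSet A → |μ A| ≤ c) {A : Set Ω} {ι : Type*} [Fintype ι]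
    {f : ι → Set Ω} (hf : ∀ j, MeasurableSet (f j) ∧ f j ⊆ A)
    (hd : Pairwise fun i j => Disjoint (f i) (f j)) :
    ∑ j, |μ (f j)| ≤ realVar μ A := by
  rw [← EReal.coe_le_coe_iff, coe_realVar hμ hc,
    ← (Fintype.equivFin ι).symm.sum_comp (fun j => |μ (f j)|)]
  exact le_totalVar (f := fun j => f ((Fintype.equivFin ι).symm j)) (fun j => hf _)
    (fun i j hij => hd ((Fintype.equivFin ι).symm.injective.ne hij))

lemma realVar_le {μ : Set Ω → ℝ} (hμ : FinAddScalar μ) {c : ℝ}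
    (hc : ∀ A, MeasurableSet A → |μ A| ≤ c) {A : Set Ω} {x : ℝ}
    (h : ∀ (n : ℕ) (f : Fin n → Set Ω), (∀ j, MeasurableSet (f j) ∧ f j ⊆ A) →
      (Pairwise fun i j => Disjoint (f i) (f j)) → ∑ j, |μ (f j)| ≤ x) :
    realVar μ A ≤ x := by
  rw [← EReal.coe_le_coe_iff, coe_realVar hμ hc]
  exact totalVar_le h

lemma realVar_nonneg (μ : Set Ω → ℝ) (A : Set Ω) : 0 ≤ realVar μ A :=
  EReal.toReal_nonneg (totalVar_nonneg μ A)

lemma abs_le_realVar {μ : Set Ω → ℝ} (hμ : FinAddScalar μ) {c : ℝ}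
    (hc : ∀ A, MeasurableSet A → |μ A| ≤ c) {A : Set Ω} (hA : MeasurableSet A) :
    |μ A| ≤ realVar μ A := by
  simpa using sum_le_realVar hμ hc (A := A) (ι := Unit) (f := fun _ => A)
    (fun _ => ⟨hA, subset_rfl⟩) (fun i j h => (h rfl).elim)

lemma finAddScalar_realVar {μ : Set Ω → ℝ} (hμ : FinAddScalar μ) {c : ℝ}
    (hc : ∀ A, MeasurableSet A → |μ A| ≤ c) : FinAddScalar (realVar μ) := by
  refine ⟨le_antisymm (realVar_le hμ hc fun n f hf _ => ?_) (realVar_nonneg _ _), ?_⟩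
  · refine (Finset.sum_eq_zero fun j _ => ?_).le
    rw [subset_empty_iff.1 (hf j).2, hμ.1, abs_zero]
  intro A B hA hB hAB
  refine le_antisymm (realVar_le hμ hc fun n f hf hd => ?_) ?_
  · have h1 : ∑ j, |μ (f j ∩ A)| ≤ realVar μ A :=
      sum_le_realVar hμ hc (fun j => ⟨(hf j).1.inter hA, inter_subset_right⟩)
        (fun i j hij => (hd hij).mono inter_subset_left inter_subset_left)
    have h2 : ∑ j, |μ (f j \ A)| ≤ realVar μ B :=
      sum_le_realVar hμ hc (fun j => ⟨(hf j).1.diff hA, by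
          rw [sdiff_subset_iff]; exact (hf j).2⟩)
        (fun i j hij => (hd hij).mono sdiff_subset sdiff_subset)
    refine le_trans ?_ (add_le_add h1 h2)
    rw [← Finset.sum_add_distrib]
    refine Finset.sum_le_sum fun j _ => ?_
    rw [hμ.inter_add_diff (hf j).1 hA]
    exact abs_add_le _ _
  · rw [← le_sub_iff_add_le]
    refine realVar_le hμ hc fun n f hf hd => ?_
    rw [le_sub_iff_add_le, add_comm, ← le_sub_iff_add_le]
    refine realVar_le hμ hc fun k g hg hd' => ?_
    rw [le_sub_iff_add_le, add_comm]
    have := sum_le_realVar hμ hc (A := A ∪ B) (f := Sum.elim f g) ?_ ?_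
    · simpa [Fintype.sum_sum_type] using this
    · rintro (j | j)
      · exact ⟨(hf j).1, (hf j).2.trans subset_union_left⟩
      · exact ⟨(hg j).1, (hg j).2.trans subset_union_right⟩
    · rintro (i | i) (j | j) hij
      · exact hd (by rintro rfl; exact hij rfl)
      · exact hAB.mono (hf i).2 (hg j).2
      · exact hAB.symm.mono (hg i).2 (hf j).2
      · exact hd' (by rintro rfl; exact hij rfl)

/-! ### Measures and real-valued countably additive set functions -/

lemma exists_measure {ν : Set Ω → ℝ} (hF : FinAddScalar ν) (hC : CountAddScalar ν)
    (h0 : ∀ A, MeasurableSet A → 0 ≤ ν A) :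
    ∃ N : Measure Ω, IsFiniteMeasure N ∧ ∀ A, MeasurableSet A → N A = ENNReal.ofReal (ν A) := by
  let N : Measure Ω := Measure.ofMeasurable (fun A _ => ENNReal.ofReal (ν A)) (by simp [hF.1])
    (fun f hf hd => by
      have h := hC f hf hd
      rw [← h.tsum_eq, ENNReal.ofReal_tsum_of_nonneg (fun n => h0 _ (hf n)) h.summable])
  have hN : ∀ A, MeasurableSet A → N A = ENNReal.ofReal (ν A) := fun A hA =>
    Measure.ofMeasurable_apply A hA
  exact ⟨N, ⟨by rw [hN _ .univ]; exact ENNReal.ofReal_lt_top⟩, hN⟩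

lemma finAddScalar_real (N : Measure Ω) [IsFiniteMeasure N] : FinAddScalar N.real :=
  ⟨by simp, fun _ _ _ hB h => measureReal_union h hB⟩

lemma countAddScalar_real (N : Measure Ω) [IsFiniteMeasure N] : CountAddScalar N.real := by
  intro A hA hd
  have h : N (⋃ n, A n) = ∑' n, N (A n) := measure_iUnion hd hA
  have hne : ∑' n, N (A n) ≠ ∞ := h ▸ measure_ne_top N _
  have := ENNReal.hasSum_toReal hne
  rw [← ENNReal.tsum_toReal_eq (fun n => measure_ne_top N _), ← h] at this
  exact this

/-! ### The countably additive part of a nonnegative charge -/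

/-- A nonnegative charge `a` has a greatest measure `M` below it, namely the infimum of `∑ a(tₙ)`
over countable measurable covers. -/
lemma exists_caPart {a : Set Ω → ℝ} (ha : FinAddScalar a)
    (h0 : ∀ A, MeasurableSet A → 0 ≤ a A) :
    ∃ M : Measure Ω, (∀ A, MeasurableSet A → M A ≤ ENNReal.ofReal (a A)) ∧
      (∀ ν : Measure Ω, (∀ A, MeasurableSet A → ν A ≤ ENNReal.ofReal (a A)) →
        ∀ A, MeasurableSet A → ν A ≤ M A) ∧
      ∀ ε : ℝ≥0∞, M univ < ε → ∃ t : ℕ → Set Ω, (∀ n, MeasurableSet (t n)) ∧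
        (⋃ n, t n) = univ ∧ ∑' n, ENNReal.ofReal (a (t n)) < ε := by
  classical
  let g : Set Ω → ℝ≥0∞ := fun t => if MeasurableSet t then ENNReal.ofReal (a t) else ∞
  have g_meas : ∀ t, MeasurableSet t → g t = ENNReal.ofReal (a t) := fun t ht => if_pos ht
  have g_empty : g ∅ = 0 := by simp [g, ha.1]
  let O : OuterMeasure Ω := OuterMeasure.ofFunction g g_empty
  have hO : ‹MeasurableSpace Ω› ≤ O.caratheodory := by
    intro s hs
    refine OuterMeasure.ofFunction_caratheodory fun t => ?_
    by_cases ht : MeasurableSet t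
    · rw [g_meas _ ht, g_meas _ (ht.inter hs), g_meas _ (ht.diff hs),
        ← ENNReal.ofReal_add (h0 _ (ht.inter hs)) (h0 _ (ht.diff hs)),
        ← ha.inter_add_diff ht hs]
    · simp [g, ht]
  refine ⟨O.toMeasure hO, fun A hA => ?_, fun ν hν A hA => ?_, fun ε hε => ?_⟩
  · rw [toMeasure_apply _ _ hA, ← g_meas A hA]
    exact OuterMeasure.ofFunction_le A
  · rw [toMeasure_apply _ _ hA]
    have : ν.toOuterMeasure ≤ O := OuterMeasure.le_ofFunction.2 fun s => by
      by_cases hs : MeasurableSet s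
      · rw [g_meas s hs]; exact hν s hs
      · simp [g, hs]
    exact this A
  · rw [toMeasure_apply _ _ .univ, OuterMeasure.ofFunction_apply] at hε
    simp only [iInf_lt_iff] at hε
    obtain ⟨t, ht, hlt⟩ := hε
    have hm : ∀ n, MeasurableSet (t n) := by
      intro n
      by_contra hn
      have h1 : g (t n) = ∞ := if_neg hn
      have h2 := ENNReal.le_tsum (f := fun n => g (t n)) n
      simp only [h1, top_le_iff] at h2
      simp [h2] at hlt
    refine ⟨t, hm, univ_subset_iff.1 ht, ?_⟩
    simpa only [fun n => g_meas _ (hm n)] using hlt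

/-- A nonnegative charge with no nonzero measure below it. -/
structure IsPureCharge (a : Set Ω → ℝ) : Prop where
  finAdd : FinAddScalar a
  nonneg : ∀ A, MeasurableSet A → 0 ≤ a A
  eq_zero : ∀ ν : Measure Ω, (∀ A, MeasurableSet A → ν A ≤ ENNReal.ofReal (a A)) → ν = 0

lemma exists_decomp_of_nonneg {a : Set Ω → ℝ} (ha : FinAddScalar a)
    (h0 : ∀ A, MeasurableSet A → 0 ≤ a A) :
    ∃ M : Measure Ω, IsFiniteMeasure M ∧ (∀ A, MeasurableSet A → M.real A ≤ a A) ∧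
      IsPureCharge fun A => a A - M.real A := by
  obtain ⟨M, hM, hmax, -⟩ := exists_caPart ha h0
  have hfin : IsFiniteMeasure M := ⟨(hM _ .univ).trans_lt ENNReal.ofReal_lt_top⟩
  have hle : ∀ A, MeasurableSet A → M.real A ≤ a A := fun A hA =>
    ENNReal.toReal_le_of_le_ofReal (h0 A hA) (hM A hA)
  refine ⟨M, hfin, hle, ha.sub (finAddScalar_real M), fun A hA => sub_nonneg.2 (hle A hA),
    fun ν hν => ?_⟩
  have h := hmax (ν + M) (fun A hA => ?_) univ .univ
  · rw [← Measure.measure_univ_eq_zero]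
    rw [Measure.add_apply] at h
    have h' : ν univ + M univ ≤ 0 + M univ := by simpa using h
    exact le_zero_iff.1 ((ENNReal.add_le_add_iff_right (measure_ne_top M _)).1 h')
  · rw [Measure.add_apply]
    calc ν A + M A ≤ ENNReal.ofReal (a A - M.real A) + ENNReal.ofReal (M.real A) :=
          add_le_add (hν A hA) (ofReal_measureReal).ge
      _ = ENNReal.ofReal (a A) := by
          rw [← ENNReal.ofReal_add (sub_nonneg.2 (hle A hA)) measureReal_nonneg, sub_add_cancel]

/-! ### Singularity of pure charges and measures -/

lemma IsPureCharge.exists_small {a : Set Ω → ℝ} (ha : IsPureCharge a) (ν : Measure Ω)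
    [IsFiniteMeasure ν] {ε : ℝ} (hε : 0 < ε) :
    ∃ X, MeasurableSet X ∧ a X < ε ∧ ν.real Xᶜ < ε := by
  obtain ⟨M, hM, -, hcov⟩ := exists_caPart ha.finAdd ha.nonneg
  obtain ⟨t, ht, htU, hlt⟩ := hcov (ENNReal.ofReal ε) (by
    rw [ha.eq_zero M hM]; simpa using hε)
  let X : ℕ → Set Ω := fun N => ⋃ n ∈ Finset.range N, t n
  have hX : ∀ N, MeasurableSet (X N) := fun N => Finset.measurableSet_biUnion _ fun i _ => ht i
  have hmono : Monotone X := fun N K h =>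
    biUnion_subset_biUnion_left fun n hn => Finset.range_mono h hn
  have hXU : (⋃ N, X N) = univ := by
    rw [← univ_subset_iff, ← htU]
    exact iUnion_subset fun n => subset_iUnion_of_subset (n + 1)
      (subset_biUnion_of_mem (u := t) (Finset.mem_coe.2 (Finset.self_mem_range_succ n)))
  have hlim : Filter.Tendsto (fun N => ν (X N)ᶜ) Filter.atTop (nhds 0) := by
    have := tendsto_measure_iInter_atTop (μ := ν) (s := fun N => (X N)ᶜ)
      (fun N => (hX N).compl.nullMeasurableSet)
      (fun N K h => compl_subset_compl.2 (hmono h)) ⟨0, measure_ne_top _ _⟩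
    rwa [← compl_iUnion, hXU, compl_univ, measure_empty] at this
  obtain ⟨N, hN⟩ := (hlim.eventually (gt_mem_nhds (ENNReal.ofReal_pos.2 hε))).exists
  refine ⟨X N, hX N, ?_, ?_⟩
  · refine (ha.finAdd.biUnion_le ha.nonneg ht _).trans_lt ?_
    rw [← ENNReal.ofReal_lt_ofReal_iff hε, ENNReal.ofReal_sum_of_nonneg fun n _ => ha.nonneg _ (ht n)]
    exact (ENNReal.sum_le_tsum _).trans_lt hlt
  · exact (ENNReal.lt_ofReal_iff_toReal_lt (measure_ne_top _ _)).1 hN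

lemma measure_eq_zero_of_le_add {a b : Set Ω → ℝ} (ha : IsPureCharge a) (hb : IsPureCharge b)
    (ν : Measure Ω) [IsFiniteMeasure ν] (h : ∀ A, MeasurableSet A → ν.real A ≤ a A + b A) :
    ν = 0 := by
  rw [← Measure.measure_univ_eq_zero, ← measureReal_eq_zero_iff]
  refine le_antisymm (le_of_forall_pos_lt_add fun ε hε => ?_) measureReal_nonneg
  obtain ⟨X, hX, haX, hνX⟩ := ha.exists_small ν (show 0 < ε / 4 by positivity)
  obtain ⟨Y, hY, hbY, hνY⟩ := hb.exists_small ν (show 0 < ε / 4 by positivity)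
  have h1 := h _ (hX.inter hY)
  have h2 := ha.finAdd.mono ha.nonneg (hX.inter hY) hX inter_subset_left
  have h3 := hb.finAdd.mono hb.nonneg (hX.inter hY) hY inter_subset_right
  have h4 : ν.real univ ≤ ν.real (X ∩ Y) + ν.real (X ∩ Y)ᶜ := by
    rw [← union_compl_self (X ∩ Y)]; exact measureReal_union_le _ _
  have h5 : ν.real (X ∩ Y)ᶜ ≤ ν.real Xᶜ + ν.real Yᶜ := by
    rw [compl_inter]; exact measureReal_union_le _ _
  linarith

/-- The nonnegative case, stated for set functions. -/
lemma eq_zero_of_le_add {a b : Set Ω → ℝ} (ha : IsPureCharge a) (hb : IsPureCharge b)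
    {ν : Set Ω → ℝ} (hF : FinAddScalar ν) (hC : CountAddScalar ν)
    (h0 : ∀ A, MeasurableSet A → 0 ≤ ν A)
    (h : ∀ A, MeasurableSet A → ν A ≤ a A + b A) {A : Set Ω} (hA : MeasurableSet A) :
    ν A = 0 := by
  obtain ⟨N, hfin, hN⟩ := exists_measure hF hC h0
  have hr : ∀ B, MeasurableSet B → N.real B = ν B := fun B hB => by
    rw [Measure.real, hN B hB, ENNReal.toReal_ofReal (h0 B hB)]
  have : N = 0 := measure_eq_zero_of_le_add ha hb N fun B hB => by rw [hr B hB]; exact h B hB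
  rw [← hr A hA, this]
  simp

/-- Restricting `κ` to the two halves of its Hahn decomposition reduces to the nonnegative case. -/
lemma eq_zero_of_abs_le_add {a b : Set Ω → ℝ} (ha : IsPureCharge a) (hb : IsPureCharge b)
    {κ : Set Ω → ℝ} (hF : FinAddScalar κ) (hC : CountAddScalar κ)
    (h : ∀ A, MeasurableSet A → |κ A| ≤ a A + b A) {A : Set Ω} (hA : MeasurableSet A) :
    κ A = 0 := by
  classical
  let s : SignedMeasure Ω :=
    { measureOf' := fun B => if MeasurableSet B then κ B else 0
      empty' := by simp [hF.1]
      not_measurable' := fun B hB => if_neg hB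
      m_iUnion' := fun f hf hd => by
        simpa only [hf, MeasurableSet.iUnion hf, if_true] using hC f hf hd }
  have hs : ∀ B, MeasurableSet B → s B = κ B := fun B hB => if_pos hB
  obtain ⟨i, hi, hpos, hneg⟩ := s.exists_compl_positive_negative
  -- `σ` is the sign for which `σ * κ` is nonnegative on subsets of `j`
  have key : ∀ (j : Set Ω) (σ : ℝ), MeasurableSet j → |σ| = 1 →
      (∀ B, MeasurableSet B → 0 ≤ σ * κ (B ∩ j)) → σ * κ (A ∩ j) = 0 := by
    intro j σ hj hσ hnn
    refine eq_zero_of_le_add (ν := fun B => σ * κ (B ∩ j)) ha hb ⟨by simp [hF.1], ?_⟩ ?_ hnn ?_ hA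
    · intro B C hB hC hBC
      simp only
      rw [union_inter_distrib_right, hF.2 _ _ (hB.inter hj) (hC.inter hj)
        (hBC.mono inter_subset_left inter_subset_left), mul_add]
    · intro f hf hd
      simp only
      rw [iUnion_inter]
      exact (hC (fun n => f n ∩ j) (fun n => (hf n).inter hj)
        fun n k hnk => (hd hnk).mono inter_subset_left inter_subset_left).mul_left σ
    · intro B hB
      have h1 := h _ (hB.inter hj)
      have h2 := ha.finAdd.mono ha.nonneg (hB.inter hj) hB inter_subset_left
      have h3 := hb.finAdd.mono hb.nonneg (hB.inter hj) hB inter_subset_left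
      have h4 : σ * κ (B ∩ j) ≤ |κ (B ∩ j)| := by
        simpa [abs_mul, hσ] using le_abs_self (σ * κ (B ∩ j))
      linarith
  have h1 := key i 1 hi (by simp) fun B hB => by
    have := VectorMeasure.subset_le_of_restrict_le_restrict _ _ hi hpos
      (inter_subset_right (s := B) (t := i))
    rw [hs _ (hB.inter hi)] at this
    simpa using this
  have h2 := key iᶜ (-1) hi.compl (by simp) fun B hB => by
    have := VectorMeasure.subset_le_of_restrict_le_restrict _ _ hi.compl hneg
      (inter_subset_right (s := B) (t := iᶜ))
    rw [hs _ (hB.inter hi.compl)] at this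
    simpa using this
  rw [hF.inter_add_diff hA hi, sdiff_eq]
  linarith

/-! ### The scalar decomposition -/

lemma PurelyFAScalar.isPureCharge_realVar {μ : Set Ω → ℝ} (hp : PurelyFAScalar μ)
    (hμ : FinAddScalar μ) {c : ℝ} (hc : ∀ A, MeasurableSet A → |μ A| ≤ c) :
    IsPureCharge (realVar μ) := by
  refine ⟨finAddScalar_realVar hμ hc, fun A _ => realVar_nonneg μ A, fun ν hν => ?_⟩
  have hfin : IsFiniteMeasure ν := ⟨(hν _ .univ).trans_lt ENNReal.ofReal_lt_top⟩
  rw [← Measure.measure_univ_eq_zero, ← measureReal_eq_zero_iff]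
  refine hp ν.real (finAddScalar_real ν) (countAddScalar_real ν) (fun A hA => ?_) univ .univ
  refine ⟨measureReal_nonneg, ?_⟩
  rw [← coe_realVar hμ hc, EReal.coe_le_coe_iff]
  exact ENNReal.toReal_le_of_le_ofReal (realVar_nonneg μ A) (hν A hA)

lemma exists_decomp_scalar (P : Measure Ω) {μ : Set Ω → ℝ} (hμ : FinAddScalar μ) {c : ℝ}
    (hc : ∀ A, MeasurableSet A → |μ A| ≤ c)
    (hW : ∀ A, MeasurableSet A → P A = 0 → μ A = 0) :
    ∃ μc : Set Ω → ℝ, FinAddScalar μc ∧ CountAddScalar μc ∧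
      (∃ C, ∀ A, MeasurableSet A → |μc A| ≤ C) ∧
      (∀ A, MeasurableSet A → P A = 0 → μc A = 0) ∧
      PurelyFAScalar fun A => μ A - μc A := by
  have hT := finAddScalar_realVar hμ hc
  have habs : ∀ A, MeasurableSet A → |μ A| ≤ realVar μ A := fun A hA => abs_le_realVar hμ hc hA
  obtain ⟨M, hMf, hM, hMp⟩ := exists_decomp_of_nonneg (hT.add hμ) fun A hA => by
    linarith [neg_abs_le (μ A), habs A hA]
  obtain ⟨N, hNf, hN, hNp⟩ := exists_decomp_of_nonneg hT fun A _ => realVar_nonneg μ A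
  refine ⟨fun A => M.real A - N.real A, (finAddScalar_real M).sub (finAddScalar_real N),
    (countAddScalar_real M).sub (countAddScalar_real N), ⟨M.real univ + N.real univ, ?_⟩, ?_, ?_⟩
  · intro A _
    have h1 : M.real A ≤ M.real univ := measureReal_mono (subset_univ A)
    have h2 : N.real A ≤ N.real univ := measureReal_mono (subset_univ A)
    have h3 : 0 ≤ M.real A := measureReal_nonneg
    have h4 : 0 ≤ N.real A := measureReal_nonneg
    exact abs_le.2 ⟨by linarith, by linarith⟩
  · intro A hA hPA
    have hz : realVar μ A ≤ 0 := realVar_le hμ hc fun n f hf _ =>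
      (Finset.sum_eq_zero fun j _ => by
        rw [hW _ (hf j).1 (measure_mono_null (hf j).2 hPA), abs_zero]).le
    have h1 := hM A hA
    have h2 := hN A hA
    have h3 : 0 ≤ M.real A := measureReal_nonneg
    have h4 : 0 ≤ N.real A := measureReal_nonneg
    rw [hW A hA hPA] at h1
    simp only
    linarith
  · intro ν hνF hνC hν A hA
    refine eq_zero_of_abs_le_add hMp hNp hνF hνC (fun B hB => ?_) hA
    rw [abs_of_nonneg (hν B hB).1, ← EReal.coe_le_coe_iff]
    refine (hν B hB).2.trans (totalVar_le fun n f hf hd => ?_)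
    have hS := hMp.finAdd.add hNp.finAdd
    have hS0 : ∀ A, MeasurableSet A → 0 ≤ realVar μ A + μ A - M.real A +
        (realVar μ A - N.real A) := fun A hA => add_nonneg (hMp.nonneg A hA) (hNp.nonneg A hA)
    have hm : MeasurableSet (⋃ j ∈ (Finset.univ : Finset (Fin n)), f j) :=
      Finset.measurableSet_biUnion _ fun j _ => (hf j).1
    refine le_trans ?_ (hS.mono hS0 hm hB (iUnion₂_subset fun j _ => (hf j).2))
    rw [hS.biUnion (fun j => (hf j).1) hd]
    refine Finset.sum_le_sum fun j _ => ?_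
    have h1 := hMp.nonneg _ (hf j).1
    have h2 := hNp.nonneg _ (hf j).1
    exact abs_le.2 ⟨by linarith, by linarith⟩

lemma unique_decomp_scalar {μ c₁ p₁ c₂ p₂ : Set Ω → ℝ}
    (hc₁ : FinAddScalar c₁) (hC₁ : CountAddScalar c₁)
    (hc₂ : FinAddScalar c₂) (hC₂ : CountAddScalar c₂)
    (hp₁ : FinAddScalar p₁) (hP₁ : PurelyFAScalar p₁)
    (hp₂ : FinAddScalar p₂) (hP₂ : PurelyFAScalar p₂) {C₁ C₂ : ℝ}
    (hb₁ : ∀ A, MeasurableSet A → |p₁ A| ≤ C₁) (hb₂ : ∀ A, MeasurableSet A → |p₂ A| ≤ C₂)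
    (h₁ : ∀ A, MeasurableSet A → μ A = c₁ A + p₁ A)
    (h₂ : ∀ A, MeasurableSet A → μ A = c₂ A + p₂ A) {A : Set Ω} (hA : MeasurableSet A) :
    c₁ A = c₂ A := by
  refine sub_eq_zero.1 (eq_zero_of_abs_le_add (κ := fun A => c₁ A - c₂ A)
    (hP₁.isPureCharge_realVar hp₁ hb₁) (hP₂.isPureCharge_realVar hp₂ hb₂)
    (hc₁.sub hc₂) (hC₁.sub hC₂) (fun B hB => ?_) hA)
  have e : c₁ B - c₂ B = p₂ B - p₁ B := by linarith [h₁ B hB, h₂ B hB]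
  rw [e]
  have := abs_sub (p₂ B) (p₁ B)
  linarith [abs_le_realVar hp₁ hb₁ hB, abs_le_realVar hp₂ hb₂ hB]

/-! ### Passage to coordinates -/

lemma FinAddVec.coord {m : Set Ω → EucV D} (hm : FinAddVec m) (i : Fin D) :
    FinAddScalar fun A => m A i :=
  ⟨by simp [hm.1], fun A B hA hB h => by simp [hm.2 A B hA hB h]⟩

lemma BoundedVec.coord {m : Set Ω → EucV D} (hm : BoundedVec m) :
    ∃ c : ℝ, ∀ i A, MeasurableSet A → |m A i| ≤ c := by
  obtain ⟨c, hc⟩ := hm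
  exact ⟨c, fun i A hA => (PiLp.norm_apply_le (m A) i).trans (hc A hA)⟩

/-- **Yosida–Hewitt decomposition for Euclidean vector measures.**  Every bounded,
weakly absolutely continuous finitely additive Euclidean measure `m` decomposes uniquely
(on the measurable sets) as `m = m^c + m^p` with `m^c` countably additive and `m^p`
purely finitely additive, both bounded and weakly absolutely continuous. -/
theorem yosida_hewitt_decomposition
    (P : Measure Ω) [IsProbabilityMeasure P]
    (m : Set Ω → EucV D)
    (hFA : FinAddVec m) (hB : BoundedVec m) (hW : WeaklyAC P m) :
    ∃ mc mp : Set Ω → EucV D,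
      FinAddVec mc ∧ BoundedVec mc ∧ WeaklyAC P mc ∧
      FinAddVec mp ∧ BoundedVec mp ∧ WeaklyAC P mp ∧
      (∀ A : Set Ω, MeasurableSet A → m A = mc A + mp A) ∧
      CountAddVec mc ∧ PurelyFAVec mp ∧
      ∀ mc' mp' : Set Ω → EucV D,
        FinAddVec mc' → BoundedVec mc' → WeaklyAC P mc' →
        FinAddVec mp' → BoundedVec mp' → WeaklyAC P mp' →
        (∀ A : Set Ω, MeasurableSet A → m A = mc' A + mp' A) →
        CountAddVec mc' → PurelyFAVec mp' →
        ∀ A : Set Ω, MeasurableSet A → mc' A = mc A ∧ mp' A = mp A := by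
  choose μc hF hC hBd hAC hP using fun i => exists_decomp_scalar P (hFA.coord i)
    (hB.coord.choose_spec i) (fun A hA h => by simp [hW A hA h])
  choose C hCb using hBd
  let mc : Set Ω → EucV D := fun A => WithLp.toLp 2 fun i => μc i A
  have hmcF : FinAddVec mc := by
    refine ⟨?_, fun A B hA hB h => ?_⟩
    · ext i; exact (hF i).1
    · ext i; exact (hF i).2 A B hA hB h
  have hmcB : BoundedVec mc := by
    refine ⟨∑ i, C i, fun A hA => ?_⟩
    calc ‖mc A‖ = ‖∑ i, EuclideanSpace.single i (μc i A)‖ := by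
          congr 1
          ext j
          simp [mc, Finset.sum_apply, Pi.single_apply]
      _ ≤ ∑ i, ‖EuclideanSpace.single i (μc i A)‖ := norm_sum_le _ _
      _ ≤ ∑ i, C i := Finset.sum_le_sum fun i _ => by simpa using hCb i A hA
  have hmcW : WeaklyAC P mc := fun A hA h => by ext i; exact hAC i A hA h
  have hmpF : FinAddVec fun A => m A - mc A := by
    refine ⟨by simp [hFA.1, hmcF.1], fun A B hA hB h => ?_⟩
    simp only [hFA.2 A B hA hB h, hmcF.2 A B hA hB h]
    abel
  have hmpB : BoundedVec fun A => m A - mc A := by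
    obtain ⟨c, hc⟩ := hB
    obtain ⟨d, hd⟩ := hmcB
    exact ⟨c + d, fun A hA => (norm_sub_le _ _).trans (add_le_add (hc A hA) (hd A hA))⟩
  have hmpP : PurelyFAVec fun A => m A - mc A := fun i => hP i
  refine ⟨mc, fun A => m A - mc A, hmcF, hmcB, hmcW, hmpF, hmpB,
    fun A hA h => by simp [hW A hA h, hmcW A hA h], fun A _ => by simp, hC, hmpP, ?_⟩
  intro mc' mp' hcF' _ _ hpF' hpB' _ hsum hC' hP' A hA
  obtain ⟨c₁, hc₁⟩ := hpB'.coord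
  obtain ⟨c₂, hc₂⟩ := hmpB.coord
  have e : mc' A = mc A := by
    ext i
    exact unique_decomp_scalar (μ := fun A => m A i) (hcF'.coord i) (hC' i) (hF i) (hC i)
      (hpF'.coord i) (hP' i) (hmpF.coord i) (hmpP i) (hc₁ i) (hc₂ i)
      (fun B hB => by simp [hsum B hB]) (fun B _ => by simp [mc]) hA
  refine ⟨e, ?_⟩
  simp only
  rw [hsum A hA, e, add_sub_cancel_left]
end
end

section
/- Let K ⊆ ℝ² be the closed convex cone generated by the vectors (1,0), (0,1), (2,−1) and (−1,2), i.e. K = {λ(2,−1) + μ(−1,2) : λ, μ ≥ 0}, and define U : ℝ² → [-∞,∞) by U(x₁,x₂) := ln x₁ + ln x₂ for x₁, x₂ > 0 and U(x₁,x₂) := −∞ otherwise. Then for every x = (x₁,x₂) ∈ ℝ², the quantity sup_{c∈K} U(x − c) equals: 2 ln(2x₁ + x₂) − 3 ln 2 if x₂ > 2|x₁|; ln x₁ + ln x₂ if x₁ > 0 and x₁ ≤ 2x₂ ≤ 4x₁; 2 ln(x₁ + 2x₂) − 3 ln 2 if x₁ > 0 and −x₁ < 2x₂ < x₁; and −∞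 otherwise. Moreover the supremum is attained (is a maximum) whenever it is finite. -/
/-!
Writing `y = x - c`, the problem is to maximise `y₁ y₂` over the positive `y` in `x - K`. The dual
cone of `K` is generated by `(1,2)` and `(2,1)`, so `y ∈ x - K` means `y₁ + 2 y₂ ≤ x₁ + 2 x₂` and
`2 y₁ + y₂ ≤ 2 x₁ + x₂` (`sub_mem_solvK_iff`). A positive such `y` exists only if both right-hand
sides are positive, and this region is the union of the three listed ones. In each of them a
supporting line of the level set of `y₁ y₂`, with normal in the dual cone, identifies the maximiser:
`y = (b/4, b/2)` with `b = 2 x₁ + x₂` in the first, `y = x` in the second, and `y = (a/2, a/4)` with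
`a = x₁ + 2 x₂` in the third.
-/

open Set

noncomputable section

/-- The solvency cone `K ⊆ ℝ²` generated by `(1,0), (0,1), (2,-1), (-1,2)`, which equals
`{λ(2,-1) + μ(-1,2) : λ, μ ≥ 0}`. -/
def solvK : Set (ℝ × ℝ) :=
  {p | ∃ l m : ℝ, 0 ≤ l ∧ 0 ≤ m ∧ p = l • ((2 : ℝ), (-1 : ℝ)) + m • ((-1 : ℝ), (2 : ℝ))}

open scoped Classical in
/-- The utility function `U(x₁,x₂) = ln x₁ + ln x₂` for `x₁, x₂ > 0`, `-∞` otherwise. -/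
def logUtil (p : ℝ × ℝ) : EReal :=
  if 0 < p.1 ∧ 0 < p.2 then ((Real.log p.1 + Real.log p.2 : ℝ) : EReal) else ⊥

/-- The value `sup_{c ∈ K} U(x - c)`. -/
def logVal (x : ℝ × ℝ) : EReal := ⨆ c ∈ solvK, logUtil (x - c)

/-- Description of `K` by the generators `(1,2)` and `(2,1)` of its dual cone. -/
theorem mem_solvK_iff (p : ℝ × ℝ) :
    p ∈ solvK ↔ 0 ≤ p.1 + 2 * p.2 ∧ 0 ≤ 2 * p.1 + p.2 := by
  obtain ⟨a, b⟩ := p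
  simp only [solvK, Set.mem_ofPred_eq, Prod.smul_mk, Prod.mk_add_mk, Prod.mk.injEq, smul_eq_mul]
  constructor
  · rintro ⟨l, m, hl, hm, rfl, rfl⟩
    constructor <;> linarith
  · rintro ⟨h1, h2⟩
    exact ⟨(2 * a + b) / 3, (a + 2 * b) / 3, by linarith, by linarith, by ring, by ring⟩

theorem sub_mem_solvK_iff (x y : ℝ × ℝ) :
    x - y ∈ solvK ↔ y.1 + 2 * y.2 ≤ x.1 + 2 * x.2 ∧ 2 * y.1 + y.2 ≤ 2 * x.1 + x.2 := by
  rw [mem_solvK_iff, Prod.fst_sub, Prod.snd_sub]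
  constructor <;> rintro ⟨h1, h2⟩ <;> constructor <;> linarith

/-- A positive point `z ∈ x - K` maximising the product `y₁ y₂` over the positive points of `x - K`
gives the value of the problem, which is attained at `c = x - z`. -/
theorem logVal_eq_of_max (x z : ℝ × ℝ) (h1 : 0 < z.1) (h2 : 0 < z.2) (hz : x - z ∈ solvK)
    (hmax : ∀ y : ℝ × ℝ, 0 < y.1 → 0 < y.2 → x - y ∈ solvK → y.1 * y.2 ≤ z.1 * z.2) :
    logVal x = ((Real.log z.1 + Real.log z.2 : ℝ) : EReal) ∧
      ∃ c ∈ solvK, logUtil (x - c) = logVal x := by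
  have hU : logUtil (x - (x - z)) = ((Real.log z.1 + Real.log z.2 : ℝ) : EReal) := by
    rw [sub_sub_cancel, logUtil, if_pos ⟨h1, h2⟩]
  have hV : logVal x = ((Real.log z.1 + Real.log z.2 : ℝ) : EReal) := by
    apply le_antisymm
    · refine iSup₂_le fun c hc => ?_
      unfold logUtil
      split_ifs with h
      · rw [EReal.coe_le_coe_iff, ← Real.log_mul h.1.ne' h.2.ne', ← Real.log_mul h1.ne' h2.ne']
        exact Real.log_le_log (mul_pos h.1 h.2)
          (hmax (x - c) h.1 h.2 (by rwa [sub_sub_cancel]))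
      · exact bot_le
    · rw [← hU]
      exact le_iSup₂ (f := fun c (_ : c ∈ solvK) => logUtil (x - c)) (x - z) hz
  exact ⟨hV, x - z, hz, hU.trans hV.symm⟩

theorem log_half_add_log_quarter {t : ℝ} (ht : 0 < t) :
    Real.log (t / 2) + Real.log (t / 4) = 2 * Real.log t - 3 * Real.log 2 := by
  have h4 : Real.log 4 = 2 * Real.log 2 := by
    rw [show (4 : ℝ) = 2 ^ 2 by norm_num, Real.log_pow]
    norm_num
  rw [Real.log_div ht.ne' (by norm_num), Real.log_div ht.ne' (by norm_num), h4]
  ring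

theorem logVal_upper (x : ℝ × ℝ) (h : 2 * |x.1| < x.2) :
    logVal x = ((2 * Real.log (2 * x.1 + x.2) - 3 * Real.log 2 : ℝ) : EReal) ∧
      ∃ c ∈ solvK, logUtil (x - c) = logVal x := by
  have ha := le_abs_self x.1
  have hb := neg_abs_le x.1
  have hpos : 0 < 2 * x.1 + x.2 := by linarith
  have key := logVal_eq_of_max x ((2 * x.1 + x.2) / 4, (2 * x.1 + x.2) / 2)
    (by simp only; positivity) (by simp only; positivity)
    ((sub_mem_solvK_iff _ _).2 ⟨by simp only; linarith, by simp only; linarith⟩) ?_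
  · rw [← log_half_add_log_quarter hpos, add_comm (Real.log _)]
    exact key
  · intro y hy1 hy2 hy
    have hy' := ((sub_mem_solvK_iff _ _).1 hy).2
    have hsq : (2 * y.1 + y.2) ^ 2 ≤ (2 * x.1 + x.2) ^ 2 :=
      pow_le_pow_left₀ (by positivity) hy' 2
    -- AM-GM for `2 y₁` and `y₂`
    nlinarith [sq_nonneg (2 * y.1 - y.2)]

theorem logVal_lower (x : ℝ × ℝ) (h : 0 < x.1 ∧ -x.1 < 2 * x.2 ∧ 2 * x.2 < x.1) :
    logVal x = ((2 * Real.log (x.1 + 2 * x.2) - 3 * Real.log 2 : ℝ) : EReal) ∧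
      ∃ c ∈ solvK, logUtil (x - c) = logVal x := by
  obtain ⟨h0, h1, h2⟩ := h
  have hpos : 0 < x.1 + 2 * x.2 := by linarith
  have key := logVal_eq_of_max x ((x.1 + 2 * x.2) / 2, (x.1 + 2 * x.2) / 4)
    (by simp only; positivity) (by simp only; positivity)
    ((sub_mem_solvK_iff _ _).2 ⟨by simp only; linarith, by simp only; linarith⟩) ?_
  · rw [← log_half_add_log_quarter hpos]
    exact key
  · intro y hy1 hy2 hy
    have hy' := ((sub_mem_solvK_iff _ _).1 hy).1
    have hsq : (y.1 + 2 * y.2) ^ 2 ≤ (x.1 + 2 * x.2) ^ 2 :=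
      pow_le_pow_left₀ (by positivity) hy' 2
    -- AM-GM for `y₁` and `2 y₂`
    nlinarith [sq_nonneg (y.1 - 2 * y.2)]

theorem logVal_middle (x : ℝ × ℝ) (h : 0 < x.1 ∧ x.1 ≤ 2 * x.2 ∧ 2 * x.2 ≤ 4 * x.1) :
    logVal x = ((Real.log x.1 + Real.log x.2 : ℝ) : EReal) ∧
      ∃ c ∈ solvK, logUtil (x - c) = logVal x := by
  obtain ⟨h0, h1, h2⟩ := h
  have hx2 : 0 < x.2 := by linarith
  refine logVal_eq_of_max x x h0 hx2 ((sub_mem_solvK_iff _ _).2 ⟨le_rfl, le_rfl⟩) ?_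
  intro y hy1 hy2 hy
  obtain ⟨ha, hb⟩ := (sub_mem_solvK_iff _ _).1 hy
  -- the tangent to the level set at `x` has normal
  -- `3 (x₂, x₁) = (2 x₁ - x₂) (1, 2) + (2 x₂ - x₁) (2, 1)`
  have htan : x.2 * y.1 + x.1 * y.2 ≤ 2 * (x.1 * x.2) := by
    have e1 := mul_le_mul_of_nonneg_left ha (show 0 ≤ 2 * x.1 - x.2 by linarith)
    have e2 := mul_le_mul_of_nonneg_left hb (show 0 ≤ 2 * x.2 - x.1 by linarith)
    linarith
  have hsq : (x.2 * y.1 + x.1 * y.2) ^ 2 ≤ (2 * (x.1 * x.2)) ^ 2 :=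
    pow_le_pow_left₀ (by positivity) htan 2
  refine le_of_mul_le_mul_left ?_ (mul_pos h0 hx2)
  nlinarith [sq_nonneg (x.2 * y.1 - x.1 * y.2)]

theorem logVal_eq_bot (x : ℝ × ℝ)
    (h : ¬ (2 * |x.1| < x.2 ∨ (0 < x.1 ∧ x.1 ≤ 2 * x.2 ∧ 2 * x.2 ≤ 4 * x.1) ∨
      (0 < x.1 ∧ -x.1 < 2 * x.2 ∧ 2 * x.2 < x.1))) :
    logVal x = ⊥ := by
  refine eq_bot_iff.2 (iSup₂_le fun c hc => ?_)
  unfold logUtil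
  split_ifs with hp
  · exfalso
    apply h
    obtain ⟨p1, p2⟩ := hp
    rw [Prod.fst_sub] at p1
    rw [Prod.snd_sub] at p2
    obtain ⟨ha, hb⟩ := (mem_solvK_iff c).1 hc
    have ha' : 0 < x.1 + 2 * x.2 := by linarith
    have hb' : 0 < 2 * x.1 + x.2 := by linarith
    rcases le_or_gt x.1 0 with hx | hx
    · left
      rw [abs_of_nonpos hx]
      linarith
    · rw [abs_of_pos hx]
      rcases lt_or_ge (2 * x.2) x.1 with h3 | h3
      · exact Or.inr (Or.inr ⟨hx, by linarith, h3⟩)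
      · rcases le_or_gt (2 * x.2) (4 * x.1) with h4 | h4
        · exact Or.inr (Or.inl ⟨hx, h3, h4⟩)
        · exact Or.inl (by linarith)
  · exact le_rfl

/-- Explicit computation of `sup_{c ∈ K} U(x-c)` for the log-utility and the constant
solvency cone `K` generated by `(1,0),(0,1),(2,-1),(-1,2)`; moreover the supremum is
attained whenever it is finite. -/
theorem logVal_formula :
    ∀ x : ℝ × ℝ,
      (2 * |x.1| < x.2 →
        logVal x = ((2 * Real.log (2 * x.1 + x.2) - 3 * Real.log 2 : ℝ) : EReal)) ∧
      (0 < x.1 ∧ x.1 ≤ 2 * x.2 ∧ 2 * x.2 ≤ 4 * x.1 →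
        logVal x = ((Real.log x.1 + Real.log x.2 : ℝ) : EReal)) ∧
      (0 < x.1 ∧ -x.1 < 2 * x.2 ∧ 2 * x.2 < x.1 →
        logVal x = ((2 * Real.log (x.1 + 2 * x.2) - 3 * Real.log 2 : ℝ) : EReal)) ∧
      (¬ (2 * |x.1| < x.2 ∨ (0 < x.1 ∧ x.1 ≤ 2 * x.2 ∧ 2 * x.2 ≤ 4 * x.1) ∨
          (0 < x.1 ∧ -x.1 < 2 * x.2 ∧ 2 * x.2 < x.1)) →
        logVal x = ⊥) ∧
      (logVal x ≠ ⊥ → ∃ c ∈ solvK, logUtil (x - c) = logVal x) := by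
  intro x
  refine ⟨fun h => (logVal_upper x h).1, fun h => (logVal_middle x h).1,
    fun h => (logVal_lower x h).1, logVal_eq_bot x, fun hne => ?_⟩
  by_contra hno
  refine hne (logVal_eq_bot x ?_)
  rintro (h | h | h)
  · exact hno (logVal_upper x h).2
  · exact hno (logVal_middle x h).2
  · exact hno (logVal_lower x h).2
end
end
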